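/- arXiv:2308.06130 — 8 statements merged into one kernel-verified Lean document; each statement's English description precedes it below -/
import Mathlib

section
/- Let D be an integer with D ≡ 0 or 1 (mod 4) and let r be a positive integer. For every primitive binary quadratic form f of discriminant D·r² there exist a binary quadratic form g of discriminant D and a 2×2 integer matrix A with det(A) = r such that f is derived from g via A. -/
/-- A binary quadratic form `(a, b, c)` evaluated at `(x, y)`. -/
def qfEval (f : ℤ × ℤ × ℤ) (x y : ℤ) : ℤ :=
  f.1 * x ^ 2 + f.2.1 * x * y + f.2.2 * y ^ 2

/-- The discriminant `b² - 4ac` of the form `(a, b, c)`. -/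
def qfDisc (f : ℤ × ℤ × ℤ) : ℤ := f.2.1 ^ 2 - 4 * f.1 * f.2.2

/-- The form `(a, b, c)` is primitive if `gcd(a, b, c) = 1`. -/
def IsPrimitiveQF (f : ℤ × ℤ × ℤ) : Prop :=
  Int.gcd (Int.gcd f.1 f.2.1) f.2.2 = 1

/-- `f` is derived from `g` via the matrix `A`, i.e. `f(x,y) = g(A·(x,y)ᵀ)`. -/
def DerivedVia (f g : ℤ × ℤ × ℤ) (A : Matrix (Fin 2) (Fin 2) ℤ) : Prop :=
  ∀ x y : ℤ, qfEval f x y = qfEval g (A 0 0 * x + A 0 1 * y) (A 1 0 * x + A 1 1 * y)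

/-- Two forms are equivalent if one is derived from the other via a determinant-1
integer matrix. -/
def QFEquiv (f g : ℤ × ℤ × ℤ) : Prop :=
  ∃ A : Matrix (Fin 2) (Fin 2) ℤ, A.det = 1 ∧ DerivedVia f g A

theorem derived_trans {f g h : ℤ × ℤ × ℤ} {A B : Matrix (Fin 2) (Fin 2) ℤ}
    (h1 : DerivedVia f g A) (h2 : DerivedVia g h B) : DerivedVia f h (B * A) := by
  intro x y
  rw [h1, h2]
  simp only [Matrix.mul_apply, Fin.sum_univ_two]
  congr 1 <;> ring

theorem core_step (a b c D p : ℤ) (hp : p ≠ 0) (hap : IsCoprime a p)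
    (hD : D % 4 = 0 ∨ D % 4 = 1) (h : b ^ 2 - 4 * a * c = D * p ^ 2) :
    ∃ B C k : ℤ, B ^ 2 - 4 * a * C = D ∧ b = p * B - 2 * a * k ∧
      c = p ^ 2 * C - a * k ^ 2 - b * k := by
  obtain ⟨s, hs⟩ : ∃ s, b = p * D + 2 * s := by
    have h2 : (2 : ℤ) ∣ b - p * D := by
      have h3 : Even (b ^ 2 - D * p ^ 2) := ⟨2 * a * c, by linarith⟩
      have h4 : Even (b - p * D) := by
        simp only [Int.even_sub, Int.even_mul, Int.even_pow] at h3 ⊢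
        tauto
      exact h4.two_dvd
    obtain ⟨s, hs⟩ := h2
    exact ⟨s, by linarith⟩
  obtain ⟨u, v, huv⟩ := hap
  -- s + a k = p t with k = -s u, t = s v
  have hb : b = p * (D + 2 * (s * v)) - 2 * a * (-(s * u)) := by
    rw [hs]; linear_combination (-2 * s) * huv
  obtain ⟨k, hk⟩ : ∃ k, k = -(s * u) := ⟨_, rfl⟩
  obtain ⟨B, hB⟩ : ∃ B, B = D + 2 * (s * v) := ⟨_, rfl⟩
  obtain ⟨m, hm⟩ : ∃ m, B ^ 2 - D = 4 * m := by
    have : ∃ n, D * D - D = 4 * n := by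
      rcases hD with hD | hD
      · exact ⟨D / 4 * (D - 1), by
          have : D = 4 * (D / 4) := by omega
          linear_combination (D - 1) * this⟩
      · exact ⟨D / 4 * D, by
          have : D - 1 = 4 * (D / 4) := by omega
          linear_combination D * this⟩
    obtain ⟨n, hn⟩ := this
    exact ⟨n + D * (s * v) + (s * v) ^ 2, by rw [hB]; linear_combination hn⟩
  rw [← hk, ← hB] at hb
  have hc : a * (a * k ^ 2 + b * k + c) = p ^ 2 * m := by
    have : 4 * (a * (a * k ^ 2 + b * k + c)) = 4 * (p ^ 2 * m) := by
      linear_combination (b + 2 * a * k + p * B) * hb - h + p ^ 2 * hm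
    linarith
  have hcop : IsCoprime (p ^ 2) a := (IsCoprime.pow_right ⟨u, v, huv⟩).symm
  obtain ⟨C, hC⟩ := hcop.dvd_of_dvd_mul_left ⟨m, hc⟩
  refine ⟨B, C, k, ?_, hb, by linarith⟩
  have : a * C = m := by
    apply mul_left_cancel₀ (pow_ne_zero 2 hp)
    rw [← hc, hC]; ring
  linear_combination hm - 4 * this

theorem core_form (D p : ℤ) (f : ℤ × ℤ × ℤ) (hp : p ≠ 0) (hap : IsCoprime f.1 p)
    (hD : D % 4 = 0 ∨ D % 4 = 1) (h : qfDisc f = D * p ^ 2) :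
    ∃ (g : ℤ × ℤ × ℤ) (A : Matrix (Fin 2) (Fin 2) ℤ),
      qfDisc g = D ∧ A.det = p ∧ DerivedVia f g A := by
  obtain ⟨B, C, k, h1, h2, h3⟩ := core_step f.1 f.2.1 f.2.2 D p hp hap hD h
  refine ⟨(f.1, B, C), !![1, -k; 0, p], h1, by simp [Matrix.det_fin_two], ?_⟩
  intro x y
  simp only [qfEval, Matrix.of_apply, Matrix.cons_val', Matrix.cons_val_zero,
    Matrix.cons_val_one, Matrix.cons_val_fin_one]
  rw [h3]
  linear_combination (x * y - k * y ^ 2) * h2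

theorem lift_equiv (D p : ℤ) (f f' : ℤ × ℤ × ℤ) (U : Matrix (Fin 2) (Fin 2) ℤ)
    (hU : U.det = 1) (hd : DerivedVia f f' U)
    (h : ∃ (g : ℤ × ℤ × ℤ) (A : Matrix (Fin 2) (Fin 2) ℤ),
      qfDisc g = D ∧ A.det = p ∧ DerivedVia f' g A) :
    ∃ (g : ℤ × ℤ × ℤ) (A : Matrix (Fin 2) (Fin 2) ℤ),
      qfDisc g = D ∧ A.det = p ∧ DerivedVia f g A := by
  obtain ⟨g, A, h1, h2, h3⟩ := h
  exact ⟨g, A * U, h1, by rw [Matrix.det_mul, h2, hU, mul_one], derived_trans hd h3⟩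

theorem prime_step (D p : ℤ) (f : ℤ × ℤ × ℤ) (hp : Prime p)
    (hf : ∀ d : ℤ, d ∣ f.1 → d ∣ f.2.1 → d ∣ f.2.2 → IsUnit d)
    (hD : D % 4 = 0 ∨ D % 4 = 1) (h : qfDisc f = D * p ^ 2) :
    ∃ (g : ℤ × ℤ × ℤ) (A : Matrix (Fin 2) (Fin 2) ℤ),
      qfDisc g = D ∧ A.det = p ∧ DerivedVia f g A := by
  have cop : ∀ x : ℤ, ¬ p ∣ x → IsCoprime x p := fun x hx =>
    ((Prime.coprime_iff_not_dvd hp).2 hx).symm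
  obtain ⟨a, b, c⟩ := f
  simp only [qfDisc] at h hf
  by_cases ha : p ∣ a
  · by_cases hc : p ∣ c
    · have hb : ¬ p ∣ b := fun hb => hp.not_isUnit (hf p ha hb hc)
      refine lift_equiv D p _ (a + b + c, b + 2 * c, c) !![1, 0; -1, 1]
        (by simp [Matrix.det_fin_two]) ?_ (core_form D p _ hp.ne_zero (cop _ ?_) hD ?_)
      · intro x y
        simp [qfEval]
        ring
      · intro hs
        apply hb
        have := dvd_sub (dvd_sub hs ha) hc
        ring_nf at this
        exact this
      · simp only [qfDisc]; linear_combination h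
    · refine lift_equiv D p _ (c, -b, a) !![0, 1; -1, 0]
        (by simp [Matrix.det_fin_two]) ?_ (core_form D p _ hp.ne_zero (cop _ hc) hD ?_)
      · intro x y
        simp [qfEval]
        ring
      · simp only [qfDisc]; linear_combination h
  · exact core_form D p _ hp.ne_zero (cop _ ha) hD h

theorem prim_of_derived {f g : ℤ × ℤ × ℤ} {A : Matrix (Fin 2) (Fin 2) ℤ}
    (hd : DerivedVia f g A)
    (hf : ∀ d : ℤ, d ∣ f.1 → d ∣ f.2.1 → d ∣ f.2.2 → IsUnit d) :
    ∀ d : ℤ, d ∣ g.1 → d ∣ g.2.1 → d ∣ g.2.2 → IsUnit d := by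
  intro d h1 h2 h3
  have key : ∀ x y, d ∣ qfEval f x y := by
    intro x y
    rw [hd]
    exact dvd_add (dvd_add (h1.mul_right _) ((h2.mul_right _).mul_right _)) (h3.mul_right _)
  have ka : d ∣ f.1 := by simpa [qfEval] using key 1 0
  have kc : d ∣ f.2.2 := by simpa [qfEval] using key 0 1
  have kb : d ∣ f.2.1 := by
    have := dvd_sub (dvd_sub (key 1 1) ka) kc
    simp only [qfEval] at this
    ring_nf at this
    exact this
  exact hf d ka kb kc

theorem main_aux (D : ℤ) (hD : D % 4 = 0 ∨ D % 4 = 1) (r : ℕ) :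
    0 < r → ∀ f : ℤ × ℤ × ℤ,
    (∀ d : ℤ, d ∣ f.1 → d ∣ f.2.1 → d ∣ f.2.2 → IsUnit d) →
    qfDisc f = D * (r : ℤ) ^ 2 →
    ∃ (g : ℤ × ℤ × ℤ) (A : Matrix (Fin 2) (Fin 2) ℤ),
      qfDisc g = D ∧ A.det = (r : ℤ) ∧ DerivedVia f g A := by
  induction r using induction_on_primes with
  | zero => intro h; omega
  | one =>
    intro _ f _ h
    refine ⟨f, 1, by simpa using h, by simp, ?_⟩
    intro x y
    simp
  | prime_mul p a hp ih =>
    intro hr f hf h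
    have ha : 0 < a := Nat.pos_of_mul_pos_left hr
    have hD' : (D * (a : ℤ) ^ 2) % 4 = 0 ∨ (D * (a : ℤ) ^ 2) % 4 = 1 := by
      have h4 : (a : ℤ) ^ 2 % 4 = 0 ∨ (a : ℤ) ^ 2 % 4 = 1 := by
        have : (a : ℤ) % 4 = 0 ∨ (a : ℤ) % 4 = 1 ∨ (a : ℤ) % 4 = 2 ∨ (a : ℤ) % 4 = 3 := by omega
        rcases this with h | h | h | h <;> simp [pow_two, Int.mul_emod, h]
      rcases hD with h | h <;> rcases h4 with h' | h' <;> simp [Int.mul_emod, h, h']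
    obtain ⟨g, A, h1, h2, h3⟩ := prime_step (D * (a : ℤ) ^ 2) p f
      (Nat.prime_iff_prime_int.1 hp) hf hD' (by rw [h]; push_cast; ring)
    obtain ⟨g', B, k1, k2, k3⟩ := ih ha g (prim_of_derived h3 hf) h1
    exact ⟨g', B * A, k1, by rw [Matrix.det_mul, h2, k2]; push_cast; ring, derived_trans h3 k3⟩

theorem stmt0 (D : ℤ) (hD : D % 4 = 0 ∨ D % 4 = 1) (r : ℕ) (hr : 0 < r)
    (f : ℤ × ℤ × ℤ) (hf : IsPrimitiveQF f) (hdisc : qfDisc f = D * (r : ℤ) ^ 2) :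
    ∃ (g : ℤ × ℤ × ℤ) (A : Matrix (Fin 2) (Fin 2) ℤ),
      qfDisc g = D ∧ A.det = (r : ℤ) ∧ DerivedVia f g A := by
  refine main_aux D hD r hr f ?_ hdisc
  intro d h1 h2 h3
  have := Int.dvd_coe_gcd (Int.dvd_coe_gcd h1 h2) h3
  unfold IsPrimitiveQF at hf
  rw [hf] at this
  exact isUnit_of_dvd_one (by simpa using this)
end

section
/- Let (a,b,c) be a primitive binary quadratic form with a > 0 of discriminant D, where D < −4 and D ≡ 0 or 1 (mod 4), and let p be an odd prime with gcd(a,p) = 1. Consider the p+1 forms of discriminant D·p²: F_h = (a·p², p·(b+2ah), a·h²+b·h+c) for h = 0, 1, …, p−1, together with F_∞ = (a, b·p, c·p²). Then exactly p − (D/p) of these p+1 forms are primitive, and the primitive ones among them are pairwise inequivalent. -/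
/-- The `p + 1` forms of discriminant `D·p²` obtained from `(a, b, c)` by the
representative transformations: `(a·p², p·(b + 2ah), a·h² + b·h + c)` for
`0 ≤ h ≤ p - 1` (indices `i < p`), and `(a, b·p, c·p²)` (index `i = p`). -/
def derivedForm (a b c : ℤ) (p : ℕ) (i : Fin (p + 1)) : ℤ × ℤ × ℤ :=
  if (i : ℕ) < p then
    (a * (p : ℤ) ^ 2, (p : ℤ) * (b + 2 * a * (i.val : ℤ)),
      a * (i.val : ℤ) ^ 2 + b * (i.val : ℤ) + c)
  else (a, b * (p : ℤ), c * (p : ℤ) ^ 2)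

theorem prim_iff (u v w : ℤ) : IsPrimitiveQF (u, v, w) ↔
    ∀ q : ℕ, q.Prime → (q : ℤ) ∣ u → (q : ℤ) ∣ v → (q : ℤ) ∣ w → False := by
  unfold IsPrimitiveQF
  simp only
  constructor
  · intro h q hq h1 h2 h3
    have h4 : (q : ℤ) ∣ (Int.gcd (Int.gcd u v) w : ℤ) :=
      Int.dvd_coe_gcd (Int.dvd_coe_gcd h1 h2) h3
    rw [h] at h4
    have : q ∣ 1 := by exact_mod_cast h4
    exact hq.one_lt.ne' (Nat.dvd_one.mp this)
  · intro h
    by_contra hne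
    obtain ⟨q, hq, hd⟩ := Nat.exists_prime_and_dvd hne
    have hd' : (q : ℤ) ∣ (Int.gcd (Int.gcd u v) w : ℤ) := by exact_mod_cast hd
    have h1 := hd'.trans (Int.gcd_dvd_left _ _)
    exact h q hq (h1.trans (Int.gcd_dvd_left _ _)) (h1.trans (Int.gcd_dvd_right _ _))
      (hd'.trans (Int.gcd_dvd_right _ _))

theorem prim_dvd (a b c n R : ℤ) (h : IsPrimitiveQF (a, b, c)) (hb : n ∣ b * R) (hc : n ∣ c * R)
    (ha : n ∣ a * R) : n ∣ R := by
  unfold IsPrimitiveQF at h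
  simp only at h
  have e1 := Int.gcd_eq_gcd_ab a b
  have e2 := Int.gcd_eq_gcd_ab (Int.gcd a b) c
  rw [h, e1] at e2
  push_cast at e2
  have : R = (a * R) * (Int.gcdA a b * Int.gcdA (Int.gcd a b) c)
      + (b * R) * (Int.gcdB a b * Int.gcdA (Int.gcd a b) c)
      + (c * R) * Int.gcdB (Int.gcd a b) c := by
    rw [e1]
    linear_combination R * e2
  rw [this]
  exact dvd_add (dvd_add (ha.mul_right _) (hb.mul_right _)) (hc.mul_right _)

theorem automorph (a b c P Q R S n : ℤ) (ha : a ≠ 0) (hn : n ≠ 0) (h : IsPrimitiveQF (a, b, c))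
    (e1 : a * P ^ 2 + b * P * R + c * R ^ 2 = n * a)
    (e2 : 2 * a * P * Q + b * (P * S + Q * R) + 2 * c * R * S = n * b)
    (e3 : a * Q ^ 2 + b * Q * S + c * S ^ 2 = n * c)
    (hd : P * S - Q * R = n) :
    ∃ v, R = a * v ∧ S = P + b * v ∧ Q = -(c * v) := by
  have f1 : a * (S - P) = b * R := by
    have : (2 * n) * (a * (S - P)) = (2 * n) * (b * R) := by
      linear_combination (-2*S) * e1 + R * e2 + (2 * a * P + b * R) * hd
    exact mul_left_cancel₀ (by simpa using hn) this
  have f2 : a * Q = -(c * R) := by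
    have : (2 * n) * (a * Q) = (2 * n) * (-(c * R)) := by
      linear_combination (-2*Q) * e1 + P * e2 - (b * P + 2 * c * R) * hd
    exact mul_left_cancel₀ (by simpa using hn) this
  obtain ⟨v, hv⟩ : a ∣ R := by
    apply prim_dvd a b c a R h
    · exact ⟨_, f1.symm⟩
    · exact ⟨-Q, by linear_combination f2⟩
    · exact ⟨_, rfl⟩
  refine ⟨v, hv, ?_, ?_⟩
  · apply mul_left_cancel₀ ha
    rw [hv] at f1
    linear_combination f1
  · apply mul_left_cancel₀ ha
    rw [hv] at f2
    linear_combination f2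

theorem core (a b c : ℤ) (ha : 0 < a) (hprim : IsPrimitiveQF (a, b, c))
    (hD4 : b ^ 2 - 4 * a * c < -4)
    (p : ℕ) (hp : p.Prime) (hodd : Odd p) (hcop : ¬ (p : ℤ) ∣ a)
    (x y z x' y' z' α β γ δ : ℤ) (hxz : x * z = p) (hxz' : x' * z' = p)
    (hdet : α * δ - β * γ = 1)
    (hF : IsPrimitiveQF (a * x ^ 2, 2 * a * x * y + b * x * z, a * y ^ 2 + b * y * z + c * z ^ 2))
    (h : ∀ s t : ℤ, a * (x * s + y * t) ^ 2 + b * (x * s + y * t) * (z * t) + c * (z * t) ^ 2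
      = a * (x' * (α * s + β * t) + y' * (γ * s + δ * t)) ^ 2
        + b * (x' * (α * s + β * t) + y' * (γ * s + δ * t)) * (z' * (γ * s + δ * t))
        + c * (z' * (γ * s + δ * t)) ^ 2) :
    ∃ ε : ℤ, (ε = 1 ∨ ε = -1) ∧ x' * α + y' * γ = ε * x ∧ x' * β + y' * δ = ε * y ∧
      z' * γ = 0 ∧ z' * δ = ε * z := by
  have hpp : Prime (p : ℤ) := Nat.prime_iff_prime_int.mp hp
  have hp0 : (p : ℤ) ≠ 0 := hpp.ne_zero
  -- B = M' A
  obtain ⟨B1, hB1⟩ : ∃ B1, B1 = x' * α + y' * γ := ⟨_, rfl⟩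
  obtain ⟨B2, hB2⟩ : ∃ B2, B2 = x' * β + y' * δ := ⟨_, rfl⟩
  obtain ⟨B3, hB3⟩ : ∃ B3, B3 = z' * γ := ⟨_, rfl⟩
  obtain ⟨B4, hB4⟩ : ∃ B4, B4 = z' * δ := ⟨_, rfl⟩
  have hBdet : B1 * B4 - B2 * B3 = p := by
    rw [hB1, hB2, hB3, hB4]; linear_combination x' * z' * hdet + hxz'
  rw [← hB1, ← hB2, ← hB3, ← hB4]
  have g : ∀ s t : ℤ, a * (x * s + y * t) ^ 2 + b * (x * s + y * t) * (z * t) + c * (z * t) ^ 2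
      = a * (B1 * s + B2 * t) ^ 2 + b * (B1 * s + B2 * t) * (B3 * s + B4 * t)
        + c * (B3 * s + B4 * t) ^ 2 := by
    intro s t
    rw [h s t, hB1, hB2, hB3, hB4]; ring
  clear h hB1 hB2 hB3 hB4
  have g1 := g 1 0
  have g2 := g 0 1
  have g3 := g 1 1
  -- V = B adj(M)
  obtain ⟨P, hP⟩ : ∃ P, P = B1 * z := ⟨_, rfl⟩
  obtain ⟨Q, hQ⟩ : ∃ Q, Q = B2 * x - B1 * y := ⟨_, rfl⟩
  obtain ⟨R, hR⟩ : ∃ R, R = B3 * z := ⟨_, rfl⟩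
  obtain ⟨S, hS⟩ : ∃ S, S = B4 * x - B3 * y := ⟨_, rfl⟩
  have G : ∀ s t : ℤ, a * (P * s + Q * t) ^ 2 + b * (P * s + Q * t) * (R * s + S * t)
      + c * (R * s + S * t) ^ 2 = (p : ℤ) ^ 2 * (a * s ^ 2 + b * s * t + c * t ^ 2) := by
    intro s t
    have := g (z * s - y * t) (x * t)
    rw [hP, hQ, hR, hS, ← hxz]
    linear_combination -this
  have G1 := G 1 0
  have G2 := G 0 1
  have G3 := G 1 1
  obtain ⟨v, hv1, hv2, hv3⟩ := automorph a b c P Q R S ((p : ℤ) ^ 2) ha.ne' (pow_ne_zero _ hp0)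
    hprim (by linear_combination G1) (by linear_combination G3 - G1 - G2) (by linear_combination G2)
    (by rw [hP, hQ, hR, hS]; linear_combination x * z * hBdet + (p : ℤ) * hxz)
  have hdV : P * S - Q * R = (p : ℤ) ^ 2 := by
    rw [hP, hQ, hR, hS]; linear_combination x * z * hBdet + (p : ℤ) * hxz
  -- V M = p B
  have k1 : P * x = p * B1 := by rw [hP]; linear_combination B1 * hxz
  have k2 : P * y + Q * z = p * B2 := by rw [hP, hQ]; linear_combination B2 * hxz
  have k3 : R * x = p * B3 := by rw [hR]; linear_combination B3 * hxz
  have k4 : R * y + S * z = p * B4 := by rw [hR, hS]; linear_combination B4 * hxz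
  have nrm : (P + S) ^ 2 - (b ^ 2 - 4 * a * c) * v ^ 2 = 4 * (p : ℤ) ^ 2 := by
    rw [← hdV, hv2, hv3, hv1]; ring
  by_cases hpv : (p : ℤ) ∣ v
  · obtain ⟨v', rfl⟩ := hpv
    have : (p : ℤ) ∣ (P + S) := by
      apply hpp.dvd_of_dvd_pow (n := 2)
      exact ⟨4 * p + (b ^ 2 - 4 * a * c) * p * v' ^ 2, by linear_combination nrm⟩
    obtain ⟨w, hw⟩ := this
    rw [hw] at nrm
    have nrm' : w ^ 2 - (b ^ 2 - 4 * a * c) * v' ^ 2 = 4 := by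
      apply mul_left_cancel₀ (pow_ne_zero 2 hp0)
      linear_combination nrm
    have hv0 : v' = 0 := by
      by_contra hne
      have : 0 < v' ^ 2 := by positivity
      have h1 : 1 ≤ v' ^ 2 := this
      have h2 : 0 ≤ (-(b ^ 2 - 4 * a * c)) * (v' ^ 2 - 1) :=
        mul_nonneg (by linarith) (by linarith)
      have h3 := sq_nonneg w
      linarith
    subst hv0
    have hw2 : (w - 2) * (w + 2) = 0 := by linear_combination nrm'
    obtain ⟨ε, hε, hwε⟩ : ∃ ε : ℤ, (ε = 1 ∨ ε = -1) ∧ w = 2 * ε := by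
      rcases mul_eq_zero.mp hw2 with h | h
      · exact ⟨1, Or.inl rfl, by linarith⟩
      · exact ⟨-1, Or.inr rfl, by linarith⟩
    have hPe : P = p * ε := by
      rw [hwε] at hw; linarith
    have hSe : S = p * ε := by
      rw [hwε] at hw; linarith
    have hR0 : R = 0 := by rw [hv1]; ring
    have hQ0 : Q = 0 := by rw [hv3]; ring
    rw [hPe] at k1 k2
    rw [hR0] at k3 k4
    rw [hQ0] at k2
    rw [hSe] at k4
    refine ⟨ε, hε, ?_, ?_, ?_, ?_⟩ <;> apply mul_left_cancel₀ hp0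
    · linear_combination -k1
    · linear_combination -k2
    · linear_combination -k3
    · linear_combination -k4
  · exfalso
    have hx : (p : ℤ) ∣ x := by
      have : (p : ℤ) ∣ a * v * x := ⟨B3, by rw [← k3, hv1]⟩
      rcases hpp.dvd_or_dvd this with h | h
      · rcases hpp.dvd_or_dvd h with h | h
        · exact absurd h hcop
        · exact absurd h hpv
      · exact h
    have hf : (p : ℤ) ∣ a * y ^ 2 + b * y * z + c * z ^ 2 := by
      have : (p : ℤ) ∣ v * (a * y ^ 2 + b * y * z + c * z ^ 2) := by
        refine ⟨y * B4 - z * B2, ?_⟩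
        have : (p : ℤ) * (y * B4 - z * B2) = y * (R * y + S * z) - z * (P * y + Q * z) := by
          rw [k2, k4]; ring
        rw [this, hv2, hv3, hv1]; ring
      exact (hpp.dvd_or_dvd this).resolve_left hpv
    refine (prim_iff _ _ _).mp hF p hp ?_ ?_ hf
    · exact Dvd.dvd.mul_left (hx.pow two_ne_zero) _
    · obtain ⟨k, rfl⟩ := hx
      exact ⟨2 * a * k * y + b * k * z, by ring⟩

/-- Representative upper triangular matrices. -/
def repM (p : ℕ) (i : Fin (p + 1)) : ℤ × ℤ × ℤ :=
  if (i : ℕ) < p then ((p : ℤ), (i.val : ℤ), 1) else (1, 0, (p : ℤ))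

theorem derivedForm_eq (a b c : ℤ) (p : ℕ) (i : Fin (p + 1)) :
    derivedForm a b c p i = (a * (repM p i).1 ^ 2,
      2 * a * (repM p i).1 * (repM p i).2.1 + b * (repM p i).1 * (repM p i).2.2,
      a * (repM p i).2.1 ^ 2 + b * (repM p i).2.1 * (repM p i).2.2 + c * (repM p i).2.2 ^ 2) := by
  unfold derivedForm repM
  split_ifs
  · simp only [Prod.mk.injEq]
    refine ⟨by first | rfl | ring | simp, by ring, by ring⟩
  · simp only [Prod.mk.injEq]
    refine ⟨by ring, by ring, by ring⟩

theorem repM_mul (p : ℕ) (i : Fin (p + 1)) : (repM p i).1 * (repM p i).2.2 = p := by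
  unfold repM; split_ifs <;> simp

theorem ineq (a b c : ℤ) (ha : 0 < a) (hprim : IsPrimitiveQF (a, b, c))
    (hD4 : b ^ 2 - 4 * a * c < -4)
    (p : ℕ) (hp : p.Prime) (hodd : Odd p) (hcop : ¬ (p : ℤ) ∣ a) (i j : Fin (p + 1))
    (hi : IsPrimitiveQF (derivedForm a b c p i))
    (h : QFEquiv (derivedForm a b c p i) (derivedForm a b c p j)) : i = j := by
  obtain ⟨A, hA, hd⟩ := h
  rw [Matrix.det_fin_two] at hA
  rw [derivedForm_eq] at hi
  have hp2 := hp.two_le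
  obtain ⟨ε, hε, h1, h2, h3, h4⟩ := core a b c ha hprim hD4 p hp hodd hcop _ _ _
    (repM p j).1 (repM p j).2.1 (repM p j).2.2 (A 0 0) (A 0 1) (A 1 0) (A 1 1)
    (repM_mul p i) (repM_mul p j) hA hi (by
      intro s t
      have := hd s t
      rw [derivedForm_eq, derivedForm_eq] at this
      simp only [qfEval] at this
      linear_combination this)
  generalize A 0 0 = α at *
  generalize A 0 1 = β at *
  generalize A 1 0 = γ at *
  generalize A 1 1 = δ at *
  have hz : (repM p j).2.2 ≠ 0 := by
    unfold repM; split_ifs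
    · simp
    · simp only; omega
  have hγ : γ = 0 := (mul_eq_zero.mp h3).resolve_left hz
  subst hγ
  have hδ : δ = 1 ∨ δ = -1 := by
    have : δ ∣ 1 := ⟨α, by linear_combination -hA⟩
    exact Int.isUnit_iff.mp (isUnit_of_dvd_one this)
  have hi' := i.isLt
  have hj' := j.isLt
  unfold repM at h1 h2 h4
  by_cases hip : (i : ℕ) < p <;> by_cases hjp : (j : ℕ) < p <;>
    simp only [hip, hjp, if_true, if_false] at h1 h2 h4
  · have hde : δ = ε := by linarith
    subst hde
    have hd : (p : ℤ) ∣ ((i : ℕ) : ℤ) - ((j : ℕ) : ℤ) := by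
      rcases hδ with h | h
      · subst h; exact ⟨β, by linarith⟩
      · subst h; exact ⟨-β, by linarith⟩
    have := Int.eq_zero_of_abs_lt_dvd hd (by rw [abs_lt]; omega)
    apply Fin.ext
    omega
  · exfalso
    rcases hε with h | h <;> rcases hδ with h' | h' <;> subst h <;> subst h' <;> omega
  · exfalso
    rcases hε with h | h <;> rcases hδ with h' | h' <;> subst h <;> subst h' <;> omega
  · apply Fin.ext
    omega

theorem nonprim_iff (a b c : ℤ) (hprim : IsPrimitiveQF (a, b, c))
    (p : ℕ) (hp : p.Prime) (hcop : ¬ (p : ℤ) ∣ a) (i : Fin (p + 1)) :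
    ¬ IsPrimitiveQF (derivedForm a b c p i) ↔
      (i : ℕ) < p ∧ (p : ℤ) ∣ a * (i.val : ℤ) ^ 2 + b * (i.val : ℤ) + c := by
  rw [prim_iff] at hprim
  unfold derivedForm
  split_ifs with h
  · rw [prim_iff]
    simp only [h, true_and]
    constructor
    · intro hn
      by_contra hnd
      apply hn
      intro q hq h1 h2 h3
      have hqp := Nat.prime_iff_prime_int.mp hq
      have hne : ¬ (q : ℤ) ∣ p := by
        intro hd
        have : q ∣ p := by exact_mod_cast hd
        rw [(Nat.prime_dvd_prime_iff_eq hq hp).mp this] at h3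
        exact hnd h3
      have qa : (q : ℤ) ∣ a := (hqp.dvd_or_dvd h1).resolve_right
        (fun h => hne (hqp.dvd_of_dvd_pow h))
      have qb' := (hqp.dvd_or_dvd h2).resolve_left hne
      have qb : (q : ℤ) ∣ b := by
        have := dvd_sub qb' (qa.mul_right (2 * (i.val : ℤ)))
        have e : b + 2 * a * (i.val : ℤ) - a * (2 * (i.val : ℤ)) = b := by ring
        rwa [e] at this
      have qc : (q : ℤ) ∣ c := by
        have := dvd_sub (dvd_sub h3 (qa.mul_right ((i.val : ℤ) ^ 2))) (qb.mul_right (i.val : ℤ))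
        have e : a * (i.val : ℤ) ^ 2 + b * (i.val : ℤ) + c - a * (i.val : ℤ) ^ 2
          - b * (i.val : ℤ) = c := by ring
        rwa [e] at this
      exact hprim q hq qa qb qc
    · intro hd hn
      exact hn p hp ⟨a * p, by ring⟩ ⟨_, rfl⟩ hd
  · rw [prim_iff]
    simp only [h, false_and, iff_false, not_not]
    intro q hq h1 h2 h3
    have hqp := Nat.prime_iff_prime_int.mp hq
    have hne : ¬ (q : ℤ) ∣ p := by
      intro hd
      have : q ∣ p := by exact_mod_cast hd
      rw [(Nat.prime_dvd_prime_iff_eq hq hp).mp this] at h1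
      exact hcop h1
    exact hprim q hq h1 ((hqp.dvd_or_dvd h2).resolve_right hne)
      ((hqp.dvd_or_dvd h3).resolve_right (fun h => hne (hqp.dvd_of_dvd_pow h)))

theorem count (a b c : ℤ) (hprim : IsPrimitiveQF (a, b, c))
    (p : ℕ) [hp : Fact p.Prime] (hodd : Odd p) (hcop : ¬ (p : ℤ) ∣ a) :
    (Nat.card {i : Fin (p + 1) // IsPrimitiveQF (derivedForm a b c p i)} : ℤ)
        = (p : ℤ) - legendreSym p (b ^ 2 - 4 * a * c) := by
  classical
  have hp2 : p ≠ 2 := by rintro rfl; revert hodd; decide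
  have hsq := legendreSym.card_sqrts p hp2 (b ^ 2 - 4 * a * c)
  have ha0 : (a : ZMod p) ≠ 0 := by
    rwa [Ne, ZMod.intCast_zmod_eq_zero_iff_dvd]
  have h20 : (2 : ZMod p) ≠ 0 := by
    have : Fact (2 < p) := ⟨lt_of_le_of_ne hp.out.two_le hp2.symm⟩
    exact Ring.two_ne_zero (by rw [ZMod.ringChar_zmod_n]; exact hp2)
  have hbij : (Finset.univ.filter (fun i : Fin (p + 1) =>
      ¬ IsPrimitiveQF (derivedForm a b c p i))).card =
      {x : ZMod p | x ^ 2 = ((b ^ 2 - 4 * a * c : ℤ) : ZMod p)}.toFinset.card := by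
    apply Finset.card_bij (fun i _ => (2 * a * (i.val : ℕ) + b : ZMod p))
    · intro i hi
      rw [Finset.mem_filter, nonprim_iff a b c hprim p hp.out hcop] at hi
      obtain ⟨-, -, hd⟩ := hi
      rw [← ZMod.intCast_zmod_eq_zero_iff_dvd] at hd
      push_cast at hd
      simp only [Set.mem_toFinset, Set.mem_ofPred_eq]
      push_cast
      linear_combination 4 * (a : ZMod p) * hd
    · intro i hi j hj hij
      rw [Finset.mem_filter, nonprim_iff a b c hprim p hp.out hcop] at hi hj
      have h1 : ((i.val : ℕ) : ZMod p) = ((j.val : ℕ) : ZMod p) := by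
        apply mul_left_cancel₀ (mul_ne_zero h20 ha0)
        exact add_right_cancel hij
      rw [ZMod.natCast_eq_natCast_iff] at h1
      exact Fin.ext (Nat.ModEq.eq_of_lt_of_lt h1 hi.2.1 hj.2.1)
    · intro x hx
      simp only [Set.mem_toFinset, Set.mem_ofPred_eq] at hx
      push_cast at hx
      obtain ⟨t, ht⟩ : ∃ t : ZMod p, 2 * a * t + b = x :=
        ⟨(x - b) / (2 * a), by field_simp; ring⟩
      have hlt := ZMod.val_lt t
      have hc : ((t.val : ℕ) : ZMod p) = t := ZMod.natCast_zmod_val t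
      refine ⟨⟨t.val, by omega⟩, ?_, ?_⟩
      · rw [Finset.mem_filter, nonprim_iff a b c hprim p hp.out hcop]
        refine ⟨Finset.mem_univ _, hlt, ?_⟩
        rw [← ZMod.intCast_zmod_eq_zero_iff_dvd]
        push_cast
        rw [hc]
        apply mul_left_cancel₀ (mul_ne_zero (mul_ne_zero h20 h20) ha0)
        rw [← ht] at hx
        linear_combination hx
      · simp only [hc]
        exact ht
  rw [← hbij] at hsq
  have htot := Finset.card_filter_add_card_filter_not (s := (Finset.univ : Finset (Fin (p + 1))))
    (fun i => IsPrimitiveQF (derivedForm a b c p i))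
  rw [Finset.card_univ, Fintype.card_fin] at htot
  rw [Nat.card_eq_fintype_card, Fintype.card_subtype]
  have : ((Finset.univ.filter (fun i : Fin (p + 1) =>
      IsPrimitiveQF (derivedForm a b c p i))).card : ℤ) + ((Finset.univ.filter
      (fun i : Fin (p + 1) => ¬ IsPrimitiveQF (derivedForm a b c p i))).card : ℤ) = p + 1 := by
    exact_mod_cast htot
  linarith

theorem stmt4 (a b c : ℤ) (ha : 0 < a) (hprim : IsPrimitiveQF (a, b, c))
    (D : ℤ) (hdisc : qfDisc (a, b, c) = D) (hD4 : D < -4)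
    (hDmod : D % 4 = 0 ∨ D % 4 = 1)
    (p : ℕ) (hp : p.Prime) (hodd : Odd p) (hcop : Int.gcd a (p : ℤ) = 1) :
    (Nat.card {i : Fin (p + 1) // IsPrimitiveQF (derivedForm a b c p i)} : ℤ)
        = (p : ℤ) - @legendreSym p ⟨hp⟩ D ∧
      ∀ i j : Fin (p + 1), IsPrimitiveQF (derivedForm a b c p i) →
        IsPrimitiveQF (derivedForm a b c p j) → i ≠ j →
        ¬ QFEquiv (derivedForm a b c p i) (derivedForm a b c p j) := by
  have hna : ¬ (p : ℤ) ∣ a := by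
    intro hd
    have h1 : (p : ℤ) ∣ (Int.gcd a (p : ℤ) : ℤ) := Int.dvd_coe_gcd hd dvd_rfl
    rw [hcop] at h1
    have : p ∣ 1 := by exact_mod_cast h1
    exact hp.one_lt.ne' (Nat.dvd_one.mp this)
  have hdisc' : b ^ 2 - 4 * a * c = D := hdisc
  subst hdisc'
  constructor
  · haveI : Fact p.Prime := ⟨hp⟩
    exact count a b c hprim p hodd hna
  · intro i j hi _ hij h
    exact hij (ineq a b c ha hprim hD4 p hp hodd hna i j hi h)
end

section
/- Let g = (a,b,c) be a primitive binary quadratic form of discriminant D with D ≡ 0 or 1 (mod 4), and let p be a prime with gcd(a,p) = 1. Then every binary quadratic form of discriminant D·p² that is derived from g via some 2×2 integer matrix of determinant p is equivalent to one of the p+1 forms (a·p², p·(b+2ah), a·h²+b·h+c) for some 0 ≤ h ≤ p−1, or (a, b·p, c·p²). -/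
/-- If `γ` or `δ` is coprime to `p`, both congruences have a common solution `h`. -/
lemma exists_common_h (p : ℕ) (hp : p.Prime) (α β γ δ : ℤ) (hdet : α * δ - β * γ = p)
    (h : ¬ ((p : ℤ) ∣ γ ∧ (p : ℤ) ∣ δ)) :
    ∃ k : ℕ, k < p ∧ (p : ℤ) ∣ α - k * γ ∧ (p : ℤ) ∣ β - k * δ := by
  have hpI : Prime (p : ℤ) := Nat.prime_iff_prime_int.mp hp
  have hpos : (0 : ℤ) < p := by exact_mod_cast hp.pos
  suffices H : ∃ h : ℤ, (p : ℤ) ∣ α - h * γ ∧ (p : ℤ) ∣ β - h * δ by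
    obtain ⟨h, ⟨s, hs⟩, ⟨t, ht⟩⟩ := H
    have h0 := Int.emod_nonneg h hpos.ne'
    have h1 := Int.emod_lt_of_pos h hpos
    have h2 := Int.emod_add_mul_ediv h p
    have h3 : (((h % p).toNat : ℕ) : ℤ) = h % p := Int.toNat_of_nonneg h0
    refine ⟨(h % p).toNat, by omega, ⟨s + (h / p) * γ, ?_⟩, ⟨t + (h / p) * δ, ?_⟩⟩
    · rw [h3]; linear_combination hs - γ * h2
    · rw [h3]; linear_combination ht - δ * h2
  by_cases hγ : (p : ℤ) ∣ γ
  · have hδ : ¬ (p : ℤ) ∣ δ := fun h' => h ⟨hγ, h'⟩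
    obtain ⟨u, v, huv⟩ := (hpI.coprime_iff_not_dvd).mpr hδ
    obtain ⟨g, hg⟩ := hγ
    have hα : (p : ℤ) ∣ α := by
      have : (p : ℤ) ∣ α * δ := ⟨1 + β * g, by rw [hg] at hdet; linear_combination hdet⟩
      exact (hpI.dvd_or_dvd this).resolve_right hδ
    obtain ⟨e, he⟩ := hα
    refine ⟨β * v, ⟨e - β * v * g, ?_⟩, ⟨β * u, ?_⟩⟩
    · rw [he, hg]; ring
    · linear_combination (-β) * huv
  · obtain ⟨u, v, huv⟩ := (hpI.coprime_iff_not_dvd).mpr hγ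
    refine ⟨α * v, ⟨α * u, ?_⟩, ⟨β * u - v, ?_⟩⟩
    · linear_combination (-α) * huv
    · linear_combination (-β) * huv - v * hdet

theorem stmt7 (a b c : ℤ) (hprim : IsPrimitiveQF (a, b, c)) (D : ℤ)
    (hdisc : qfDisc (a, b, c) = D) (hDmod : D % 4 = 0 ∨ D % 4 = 1)
    (p : ℕ) (hp : p.Prime) (hcop : Int.gcd a (p : ℤ) = 1)
    (f : ℤ × ℤ × ℤ) (hfd : qfDisc f = D * (p : ℤ) ^ 2)
    (A : Matrix (Fin 2) (Fin 2) ℤ) (hA : A.det = (p : ℤ))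
    (hder : DerivedVia f (a, b, c) A) :
    ∃ i : Fin (p + 1), QFEquiv f (derivedForm a b c p i) := by
  rw [Matrix.det_fin_two] at hA
  have hp0 : (p : ℤ) ≠ 0 := by exact_mod_cast hp.ne_zero
  by_cases h : (p : ℤ) ∣ A 1 0 ∧ (p : ℤ) ∣ A 1 1
  · obtain ⟨⟨s, hs⟩, ⟨t, ht⟩⟩ := h
    refine ⟨Fin.last p, !![A 0 0, A 0 1; s, t], ?_, fun x y => ?_⟩
    · rw [Matrix.det_fin_two]
      apply mul_left_cancel₀ hp0
      rw [hs, ht] at hA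
      simp
      linear_combination hA
    · rw [hder x y, hs, ht]
      simp [derivedForm, qfEval]
      ring
  · obtain ⟨k, hk, ⟨s, hs⟩, ⟨t, ht⟩⟩ := exists_common_h p hp _ _ _ _ hA h
    refine ⟨⟨k, by omega⟩, !![s, t; A 1 0, A 1 1], ?_, fun x y => ?_⟩
    · rw [Matrix.det_fin_two]
      apply mul_left_cancel₀ hp0
      simp
      linear_combination hA - A 1 1 * hs + A 1 0 * ht
    · rw [hder x y, eq_add_of_sub_eq hs, eq_add_of_sub_eq ht]
      simp [derivedForm, qfEval, hk]
      ring
end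

section
/- Let D be a positive integer and p a prime with D > p². Suppose f is a reduced binary quadratic form of discriminant −4·D·p² that is derived from the form (1,0,D) via some 2×2 integer matrix of determinant p, and that f is not equivalent to the form (1,0,D·p²). Then f = (p², 2pk, k² + D) for some integer k with −p ≤ 2k ≤ p. -/
/-- A form `(a, b, c)` of negative discriminant with `a > 0` is reduced if
`|b| ≤ a ≤ c`, and `b ≥ 0` whenever `|b| = a` or `a = c`. -/
def IsReducedQF (f : ℤ × ℤ × ℤ) : Prop :=
  0 < f.1 ∧ |f.2.1| ≤ f.1 ∧ f.1 ≤ f.2.2 ∧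
    ((|f.2.1| = f.1 ∨ f.1 = f.2.2) → 0 ≤ f.2.1)

theorem stmt8 (D : ℤ) (hD : 0 < D) (p : ℕ) (hp : p.Prime) (hDp : (p : ℤ) ^ 2 < D)
    (f : ℤ × ℤ × ℤ) (hred : IsReducedQF f) (hdisc : qfDisc f = -4 * D * (p : ℤ) ^ 2)
    (A : Matrix (Fin 2) (Fin 2) ℤ) (hA : A.det = (p : ℤ))
    (hder : DerivedVia f (1, 0, D) A)
    (hne : ¬ QFEquiv f (1, 0, D * (p : ℤ) ^ 2)) :
    ∃ k : ℤ, f = ((p : ℤ) ^ 2, 2 * (p : ℤ) * k, k ^ 2 + D) ∧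
      -(p : ℤ) ≤ 2 * k ∧ 2 * k ≤ (p : ℤ) := by
  obtain ⟨a, b, c⟩ := f
  obtain ⟨ha, hba, hac, -⟩ := hred
  rw [Matrix.det_fin_two] at hA
  have h10 := hder 1 0
  have h01 := hder 0 1
  have h11 := hder 1 1
  have hv := hder (A 1 1) (-(A 1 0))
  simp only [qfEval] at h10 h01 h11 hv
  simp only at ha hba hac
  generalize A 0 0 = α at *
  generalize A 0 1 = β at *
  generalize A 1 0 = γ at *
  generalize A 1 1 = δ at *
  have ea : a = α ^ 2 + D * γ ^ 2 := by linarith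
  have ec : c = β ^ 2 + D * δ ^ 2 := by linarith
  have eb : b = 2 * (α * β + D * γ * δ) := by linarith
  have e1 : α * δ + β * -γ = p := by linarith
  have e2 : γ * δ + δ * -γ = 0 := by ring
  rw [e1, e2] at hv
  have hγ : γ = 0 := by
    by_contra hγ
    have hγ1 : 1 ≤ γ ^ 2 := by
      have : 0 < γ ^ 2 := by positivity
      linarith
    have haD : D ≤ a := by nlinarith [sq_nonneg α]
    have hbb : b * (δ * γ) ≤ a * |δ * γ| := by
      calc b * (δ * γ) ≤ |b * (δ * γ)| := le_abs_self _
        _ = |b| * |δ * γ| := abs_mul _ _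
        _ ≤ a * |δ * γ| := mul_le_mul_of_nonneg_right hba (abs_nonneg _)
    have hq : 1 ≤ δ ^ 2 - |δ * γ| + γ ^ 2 := by
      have : 0 < δ ^ 2 - |δ * γ| + γ ^ 2 := by
        rcases abs_cases (δ * γ) with ⟨h, _⟩ | ⟨h, _⟩ <;> rw [h]
        · nlinarith [sq_nonneg (2 * δ - γ)]
        · nlinarith [sq_nonneg (2 * δ + γ)]
      linarith
    have hcg : a * γ ^ 2 ≤ c * γ ^ 2 := mul_le_mul_of_nonneg_right hac (sq_nonneg _)
    have haq := mul_le_mul_of_nonneg_left hq ha.le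
    nlinarith
  subst hγ
  have hp' : Prime (p : ℤ) := Nat.prime_iff_prime_int.mp hp
  have hp0 : (0 : ℤ) < p := by exact_mod_cast hp.pos
  have hαδ : α * δ = p := by linarith
  have hb2 := abs_le.mp hba
  rcases hp'.irreducible.isUnit_or_isUnit hαδ.symm with hu | hu
  · exfalso
    apply hne
    have hα : α ^ 2 = 1 := by rcases Int.isUnit_iff.mp hu with h | h <;> rw [h] <;> norm_num
    have ha1 : a = 1 := by rw [ea, hα]; ring
    have hb0 : b = 0 := by
      have : b = 2 * (α * β) := by rw [eb]; ring
      omega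
    have hab : α * β = 0 := by
      have : b = 2 * (α * β) := by rw [eb]; ring
      omega
    have hβ : β = 0 := by
      rcases mul_eq_zero.mp hab with h | h
      · rw [h] at hα; norm_num at hα
      · exact h
    have hδ : δ ^ 2 = (p : ℤ) ^ 2 := by rw [← hαδ, mul_pow, hα, one_mul]
    have hc : c = D * (p : ℤ) ^ 2 := by rw [ec, hβ, hδ]; ring
    refine ⟨1, by simp, ?_⟩
    intro x y
    simp [ha1, hb0, hc, qfEval]
  · refine ⟨δ * β, ?_⟩
    have hδ : δ ^ 2 = 1 := by rcases Int.isUnit_iff.mp hu with h | h <;> rw [h] <;> norm_num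
    have hα : α = p * δ := by rw [← hαδ]; linear_combination (-α) * hδ
    have ha2 : a = (p : ℤ) ^ 2 := by rw [ea, hα, mul_pow, hδ]; ring
    have hb3 : b = 2 * p * (δ * β) := by rw [eb, hα]; ring
    have hc3 : c = (δ * β) ^ 2 + D := by rw [ec, mul_pow, hδ]; ring
    refine ⟨by rw [ha2, hb3, hc3], ?_, ?_⟩
    · have h := hb2.1
      rw [hb3, ha2] at h
      refine le_of_mul_le_mul_left ?_ hp0
      linarith
    · have h := hb2.2
      rw [hb3, ha2] at h
      refine le_of_mul_le_mul_left ?_ hp0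
      linarith
end

section
/- Let a and b be positive integers, and suppose f is a reduced primitive binary quadratic form of discriminant −4·a²·b that is derived from the form (1,0,b) via some 2×2 integer matrix of determinant a, and that f is not equivalent to the form (1,0,a²·b). Let a₂ be the smallest positive divisor of a such that f is derived from the form (1,0,(a/a₂)²·b) via some 2×2 integer matrix of determinant a₂ (such a divisor exists, since a itself has this property), and set b₂ = (a/a₂)²·b. If b₂ > a₂², then f = (a₂², 2·a₂·k, k² + b₂) for some integer k with −a₂ ≤ 2k ≤ a₂. -/
theorem reduced_min (p q r x y : ℤ) (hp : 0 < p) (hq : |q| ≤ p) (hr : p ≤ r)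
    (hxy : x ≠ 0 ∨ y ≠ 0) : p ≤ p * x ^ 2 + q * x * y + r * y ^ 2 := by
  have h1 : -(p * |x * y|) ≤ q * x * y := by
    have h2 : |q * x * y| ≤ p * |x * y| := by
      rw [mul_assoc, abs_mul]
      exact mul_le_mul_of_nonneg_right hq (abs_nonneg _)
    have := neg_abs_le (q * x * y)
    linarith
  have h3 : 1 ≤ x ^ 2 - |x * y| + y ^ 2 := by
    have hx := sq_abs x
    have hy := sq_abs y
    rw [abs_mul]
    have : 0 < |x| ^ 2 + |y| ^ 2 := by
      rcases hxy with h | h <;> have := abs_pos.mpr h <;> positivity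
    nlinarith [sq_nonneg (|x| - |y|)]
  have h4 : p * y ^ 2 ≤ r * y ^ 2 := mul_le_mul_of_nonneg_right hr (sq_nonneg y)
  nlinarith

theorem stmt10 (a b : ℤ) (ha : 0 < a) (hb : 0 < b)
    (f : ℤ × ℤ × ℤ) (hred : IsReducedQF f) (hprim : IsPrimitiveQF f)
    (hdisc : qfDisc f = -4 * a ^ 2 * b)
    (A : Matrix (Fin 2) (Fin 2) ℤ) (hA : A.det = a)
    (hder : DerivedVia f (1, 0, b) A)
    (hne : ¬ QFEquiv f (1, 0, a ^ 2 * b))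
    (a₂ : ℤ)
    (ha₂ : 0 < a₂ ∧ a₂ ∣ a ∧ ∃ A₂ : Matrix (Fin 2) (Fin 2) ℤ, A₂.det = a₂ ∧
      DerivedVia f (1, 0, (a / a₂) ^ 2 * b) A₂)
    (hmin : ∀ d : ℤ, (0 < d ∧ d ∣ a ∧ ∃ A' : Matrix (Fin 2) (Fin 2) ℤ, A'.det = d ∧
      DerivedVia f (1, 0, (a / d) ^ 2 * b) A') → a₂ ≤ d)
    (hbig : (a / a₂) ^ 2 * b > a₂ ^ 2) :
    ∃ k : ℤ, f = (a₂ ^ 2, 2 * a₂ * k, k ^ 2 + (a / a₂) ^ 2 * b) ∧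
      -a₂ ≤ 2 * k ∧ 2 * k ≤ a₂ := by
  obtain ⟨p, q, r⟩ := f
  obtain ⟨hp, hq, hr, -⟩ := hred
  obtain ⟨hpos, ⟨n, hn⟩, A₂, hdet, hd⟩ := ha₂
  have hdiv : a / a₂ = n := by rw [hn]; exact Int.mul_ediv_cancel_left n hpos.ne'
  rw [hdiv] at hd hbig ⊢
  rw [Matrix.det_fin_two] at hdet
  simp only [DerivedVia, qfEval] at hd hp hq hr hmin
  generalize A₂ 0 0 = α at *
  generalize A₂ 0 1 = β at *
  generalize A₂ 1 0 = γ at *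
  generalize A₂ 1 1 = δ at *
  have e1 : p = α ^ 2 + n ^ 2 * b * γ ^ 2 := by have := hd 1 0; linarith
  have e2 : r = β ^ 2 + n ^ 2 * b * δ ^ 2 := by have := hd 0 1; linarith
  have e3 : q = 2 * α * β + 2 * (n ^ 2 * b) * γ * δ := by have := hd 1 1; linarith
  have hne0 : δ ≠ 0 ∨ -γ ≠ 0 := by
    by_contra! h
    have hγ : γ = 0 := by linarith [h.2]
    rw [h.1, hγ] at hdet
    linarith
  have hple : p ≤ a₂ ^ 2 := by
    have h := reduced_min p q r δ (-γ) hp hq hr hne0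
    have h' : p * δ ^ 2 + q * δ * (-γ) + r * (-γ) ^ 2 = a₂ ^ 2 := by
      rw [e1, e2, e3, ← hdet]; ring
    linarith
  have hγ : γ = 0 := by
    by_contra h
    have : 1 ≤ γ ^ 2 := by have : 0 < γ ^ 2 := by positivity
                           linarith
    nlinarith [sq_nonneg α, sq_nonneg a₂]
  subst hγ
  have hαδ : α * δ = a₂ := by linarith
  -- main step: a sign `s` normalising the matrix
  have key : ∀ s : ℤ, s ^ 2 = 1 → 0 < s * δ → s * δ = 1 := by
    intro s hs hsδ
    have hprod : (s * α) * (s * δ) = a₂ := by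
      rw [← hαδ]; linear_combination (α * δ) * hs
    have hsα : 0 < s * α := by
      by_contra! h
      nlinarith
    have hle : a₂ ≤ s * α := by
      apply hmin
      refine ⟨hsα, ⟨s * δ * n, by rw [hn, ← hprod]; ring⟩, !![s * α, s * β; 0, 1], ?_, ?_⟩
      · simp [Matrix.det_fin_two]
      · have hq' : a / (s * α) = s * δ * n := by
          rw [hn, ← hprod, mul_assoc]
          rw [Int.mul_ediv_cancel_left _ hsα.ne']
        intro x y
        rw [hq', hd x y]
        simp
        linear_combination (-(α * x + β * y) ^ 2 - δ ^ 2 * n ^ 2 * b * y ^ 2) * hs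
    nlinarith
  have fin : ∀ s : ℤ, s ^ 2 = 1 → s * δ = 1 →
      ∃ k : ℤ, ((p, q, r) : ℤ × ℤ × ℤ) = (a₂ ^ 2, 2 * a₂ * k, k ^ 2 + n ^ 2 * b) ∧
      -a₂ ≤ 2 * k ∧ 2 * k ≤ a₂ := by
    intro s hs hsδ
    have hα : α = s * a₂ := by
      rw [← hαδ]; linear_combination (-α) * hsδ
    have hδ : δ ^ 2 = 1 := by
      have : (s * δ) ^ 2 = 1 := by rw [hsδ]; norm_num
      rw [mul_pow, hs] at this; linarith
    have f1 : p = a₂ ^ 2 := by rw [e1, hα]; linear_combination (a₂ ^ 2) * hs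
    have f2 : q = 2 * a₂ * (s * β) := by rw [e3, hα]; ring
    have f3 : r = (s * β) ^ 2 + n ^ 2 * b := by
      rw [e2]; linear_combination (n ^ 2 * b) * hδ - β ^ 2 * hs
    have hb' := abs_le.mp hq
    refine ⟨s * β, by rw [f1, f2, f3], ?_, ?_⟩
    · have := hb'.1
      rw [f1, f2] at this
      by_contra! h
      nlinarith
    · have := hb'.2
      rw [f1, f2] at this
      by_contra! h
      nlinarith
  have hδ0 : δ ≠ 0 := by rcases hne0 with h | h; exact h; simp at h
  rcases lt_or_gt_of_ne hδ0 with h | h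
  · exact fin (-1) (by norm_num) (key (-1) (by norm_num) (by linarith))
  · exact fin 1 (by norm_num) (key 1 (by norm_num) (by linarith))
end

section
/- Let n, a, b be positive integers with n = a²·b, and let r be an odd prime with 9·r² > 16·n. Let a₁, a₂ be positive integers with gcd(r, a₁·a₂) = 1 and 9·a₁·a₂ ≤ 4·n·r². Suppose x, y ∈ ℤ satisfy x² + b·r²·y² = a₁·a₂. Let x₁, x₂ ∈ ℤ satisfy x₁² ≡ a₁ (mod r²) and x₂² ≡ a₂ (mod r²), and let x₄ ∈ ℤ satisfy x₄ ≡ x₁·x₂ (mod r²) and 2·|x₄| ≤ r². Then x = x₄ or x = −x₄. -/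
theorem stmt11 (n a b : ℤ) (hn : 0 < n) (ha : 0 < a) (hb : 0 < b)
    (hnab : n = a ^ 2 * b)
    (r : ℕ) (hr : r.Prime) (hrodd : Odd r) (hrn : 9 * (r : ℤ) ^ 2 > 16 * n)
    (a₁ a₂ : ℤ) (ha₁ : 0 < a₁) (ha₂ : 0 < a₂)
    (hgcd : Int.gcd (r : ℤ) (a₁ * a₂) = 1)
    (hle : 9 * (a₁ * a₂) ≤ 4 * n * (r : ℤ) ^ 2)
    (x y : ℤ) (hxy : x ^ 2 + b * (r : ℤ) ^ 2 * y ^ 2 = a₁ * a₂)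
    (x₁ x₂ : ℤ) (hx₁ : x₁ ^ 2 ≡ a₁ [ZMOD ((r : ℤ) ^ 2)])
    (hx₂ : x₂ ^ 2 ≡ a₂ [ZMOD ((r : ℤ) ^ 2)])
    (x₄ : ℤ) (hx₄ : x₄ ≡ x₁ * x₂ [ZMOD ((r : ℤ) ^ 2)])
    (hx₄small : 2 * |x₄| ≤ (r : ℤ) ^ 2) :
    x = x₄ ∨ x = -x₄ := by
  have hrp : Prime (r : ℤ) := Nat.prime_iff_prime_int.mp hr
  have hr0 : 0 < (r : ℤ) := by exact_mod_cast hr.pos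
  have hx2 : |2 * x| < (r : ℤ) ^ 2 := by
    apply abs_lt_of_sq_lt_sq _ (by positivity)
    have h1 : 0 ≤ b * (r : ℤ) ^ 2 * y ^ 2 := by positivity
    have h2 : 0 < (r : ℤ) ^ 2 := by positivity
    nlinarith
  have hdvd : (r : ℤ) ^ 2 ∣ (x - x₄) * (x + x₄) := by
    have h1 : x₄ ^ 2 ≡ a₁ * a₂ [ZMOD ((r : ℤ) ^ 2)] := by
      have h := hx₄.pow 2
      rw [mul_pow] at h
      exact h.trans (hx₁.mul hx₂)
    have h2 := h1.dvd
    have h3 : (r : ℤ) ^ 2 ∣ (r : ℤ) ^ 2 * (b * y ^ 2) := dvd_mul_right _ _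
    have h4 := dvd_sub h2 h3
    have e : a₁ * a₂ - x₄ ^ 2 - (r : ℤ) ^ 2 * (b * y ^ 2) = (x - x₄) * (x + x₄) := by
      rw [← hxy]; ring
    rwa [e] at h4
  have hnot : ¬ ((r : ℤ) ∣ x - x₄ ∧ (r : ℤ) ∣ x + x₄) := by
    rintro ⟨h1, h2⟩
    have h3 : (r : ℤ) ∣ 2 * x := by
      have h := dvd_add h1 h2
      have e : x - x₄ + (x + x₄) = 2 * x := by ring
      rwa [e] at h
    have hx : (r : ℤ) ∣ x := by
      rcases hrp.dvd_or_dvd h3 with h | h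
      · exfalso
        have h' : r ∣ 2 := by exact_mod_cast h
        have := (Nat.prime_dvd_prime_iff_eq hr Nat.prime_two).mp h'
        subst this
        exact absurd hrodd (by decide)
      · exact h
    have h5 : (r : ℤ) ∣ a₁ * a₂ := by
      rw [← hxy]
      exact dvd_add (dvd_pow hx two_ne_zero)
        (Dvd.intro (b * r * y ^ 2) (by ring))
    have h6 := Int.dvd_coe_gcd (dvd_refl (r : ℤ)) h5
    rw [hgcd] at h6
    exact hrp.not_unit (isUnit_of_dvd_one (by simpa using h6))
  have hb1 := abs_lt.mp hx2
  have hb2 : |2 * x₄| ≤ (r : ℤ) ^ 2 := by rw [abs_mul]; simpa using hx₄small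
  have hb3 := abs_le.mp hb2
  by_cases h : (r : ℤ) ∣ x - x₄
  · left
    have h' : ¬ (r : ℤ) ∣ x + x₄ := fun h2 => hnot ⟨h, h2⟩
    have hd := (IsCoprime.pow_left (m := 2) ((Prime.coprime_iff_not_dvd hrp).mpr h')).dvd_of_dvd_mul_right hdvd
    have := Int.eq_zero_of_abs_lt_dvd hd (abs_lt.mpr ⟨by linarith, by linarith⟩)
    linarith
  · right
    have hd := (IsCoprime.pow_left (m := 2) ((Prime.coprime_iff_not_dvd hrp).mpr h)).dvd_of_dvd_mul_left hdvd
    have := Int.eq_zero_of_abs_lt_dvd hd (abs_lt.mpr ⟨by linarith, by linarith⟩)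
    linarith
end

section
/- Let D < 0 be an integer with D ≡ 0 or 1 (mod 4), and let f and g be equivalent primitive binary quadratic forms of discriminant D with positive leading coefficients. Suppose f represents an integer m with gcd(m, D) = 1 and g represents an integer m' with gcd(m', D) = 1. Then for every odd prime p dividing D, the Legendre symbols satisfy (m/p) = (m'/p). -/
/-- The form `f` represents the integer `m`. -/
def Represents (f : ℤ × ℤ × ℤ) (m : ℤ) : Prop := ∃ x y : ℤ, qfEval f x y = m

theorem stmt12 (D : ℤ) (hD : D < 0) (hDmod : D % 4 = 0 ∨ D % 4 = 1)
    (f g : ℤ × ℤ × ℤ) (hfp : IsPrimitiveQF f) (hgp : IsPrimitiveQF g)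
    (hfl : 0 < f.1) (hgl : 0 < g.1)
    (hfd : qfDisc f = D) (hgd : qfDisc g = D) (heq : QFEquiv f g)
    (m m' : ℤ) (hm : Represents f m) (hm' : Represents g m')
    (hmD : Int.gcd m D = 1) (hm'D : Int.gcd m' D = 1) :
    ∀ (p : ℕ) (hp : p.Prime), Odd p → (p : ℤ) ∣ D →
      @legendreSym p ⟨hp⟩ m = @legendreSym p ⟨hp⟩ m' := by
  intro p hp hodd hpD
  haveI : Fact p.Prime := ⟨hp⟩
  obtain ⟨A, -, hA⟩ := heq
  obtain ⟨x₀, y₀, hxy⟩ := hm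
  rw [hA x₀ y₀] at hxy
  generalize A 0 0 * x₀ + A 0 1 * y₀ = x at hxy
  generalize A 1 0 * x₀ + A 1 1 * y₀ = y at hxy
  obtain ⟨z, w, hzw⟩ := hm'
  obtain ⟨a, b, c⟩ := g
  simp only [qfEval, qfDisc] at hxy hzw hgd
  have key : (2 * m) * (2 * m') =
      (2 * a * x * z + b * (x * w + y * z) + 2 * c * y * w) ^ 2 - D * (x * w - y * z) ^ 2 := by
    rw [← hxy, ← hzw, ← hgd]; ring
  have hne : ∀ n : ℤ, Int.gcd n D = 1 → (n : ZMod p) ≠ 0 := by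
    intro n hn h0
    rw [ZMod.intCast_zmod_eq_zero_iff_dvd] at h0
    have h1 : p ∣ Int.gcd n D := Int.natCast_dvd_natCast.mp (Int.dvd_coe_gcd h0 hpD)
    rw [hn] at h1
    exact hp.one_lt.ne' (Nat.dvd_one.mp h1)
  have h2 : (2 : ZMod p) ≠ 0 := by
    intro h
    have h3 : ((2 : ℕ) : ZMod p) = 0 := by exact_mod_cast h
    rw [ZMod.natCast_eq_zero_iff] at h3
    have := (Nat.prime_dvd_prime_iff_eq hp Nat.prime_two).mp h3
    subst this
    exact absurd hodd (by decide)
  have hm0 := hne m hmD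
  have hm'0 := hne m' hm'D
  have hD0 : (D : ZMod p) = 0 := by rwa [ZMod.intCast_zmod_eq_zero_iff_dvd]
  have hk := congrArg (Int.cast : ℤ → ZMod p) key
  generalize 2 * a * x * z + b * (x * w + y * z) + 2 * c * y * w = T at hk
  push_cast at hk
  rw [hD0, zero_mul, sub_zero] at hk
  have hmm : ((m * m' : ℤ) : ZMod p) ≠ 0 := by
    push_cast; exact mul_ne_zero hm0 hm'0
  have hone : legendreSym p (m * m') = 1 := by
    rw [legendreSym.eq_one_iff p hmm]
    refine ⟨(T : ZMod p) / 2, ?_⟩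
    push_cast
    field_simp
    linear_combination hk
  rw [legendreSym.mul] at hone
  rcases legendreSym.eq_one_or_neg_one p hm0 with h | h <;>
  rcases legendreSym.eq_one_or_neg_one p hm'0 with h' | h' <;>
  simp_all
end

section
/- Let D < 0 be an integer with D ≡ 0 or 1 (mod 4) and let r be a positive integer. Let g be a primitive binary quadratic form of discriminant D with positive leading coefficient, and let f be a form of discriminant D·r² that is derived from g via some 2×2 integer matrix of determinant r. Suppose f represents an integer m with gcd(m, D·r²) = 1 and g represents an integer m' with gcd(m', D) = 1. Then for every odd prime p dividing D, the Legendre symbols satisfy (m/p) = (m'/p). -/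
theorem stmt13 (D : ℤ) (hD : D < 0) (hDmod : D % 4 = 0 ∨ D % 4 = 1)
    (r : ℕ) (hr : 0 < r)
    (g : ℤ × ℤ × ℤ) (hgp : IsPrimitiveQF g) (hgl : 0 < g.1) (hgd : qfDisc g = D)
    (f : ℤ × ℤ × ℤ) (hfd : qfDisc f = D * (r : ℤ) ^ 2)
    (A : Matrix (Fin 2) (Fin 2) ℤ) (hA : A.det = (r : ℤ))
    (hder : DerivedVia f g A)
    (m m' : ℤ) (hm : Represents f m) (hm' : Represents g m')
    (hmD : Int.gcd m (D * (r : ℤ) ^ 2) = 1) (hm'D : Int.gcd m' D = 1) :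
    ∀ (p : ℕ) (hp : p.Prime), Odd p → (p : ℤ) ∣ D →
      @legendreSym p ⟨hp⟩ m = @legendreSym p ⟨hp⟩ m' := by
  intro p hp _ hpD
  haveI : Fact p.Prime := ⟨hp⟩
  obtain ⟨u, v, huv⟩ := hm
  rw [hder u v] at huv
  obtain ⟨z, w, hzw⟩ := hm'
  generalize A 0 0 * u + A 0 1 * v = x at huv
  generalize A 1 0 * u + A 1 1 * v = y at huv
  obtain ⟨a, b, c⟩ := g
  simp only [qfEval, qfDisc] at huv hzw hgd
  have key : 4 * m * m' = (2*a*x*z + b*(x*w+y*z) + 2*c*y*w)^2 - D * (x*w-y*z)^2 := by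
    rw [← huv, ← hzw, ← hgd]; ring
  have hD0 : ((D : ℤ) : ZMod p) = 0 := (ZMod.intCast_zmod_eq_zero_iff_dvd D p).2 hpD
  have nz : ∀ k n : ℤ, Int.gcd k n = 1 → (p : ℤ) ∣ n → ((k : ℤ) : ZMod p) ≠ 0 := by
    intro k n hk hn h
    have h1 : (p : ℤ) ∣ k := (ZMod.intCast_zmod_eq_zero_iff_dvd k p).1 h
    have h2 := Int.dvd_coe_gcd h1 hn
    rw [hk] at h2
    have h3 : p ∣ 1 := by exact_mod_cast h2
    exact hp.one_lt.ne' (Nat.dvd_one.1 h3)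
  have hm0 := nz m _ hmD (Dvd.dvd.mul_right hpD _)
  have hm0' := nz m' _ hm'D hpD
  generalize 2*a*x*z + b*(x*w+y*z) + 2*c*y*w = s at key
  have hp2 : ((2 : ℤ) : ZMod p) ≠ 0 := by
    intro h
    have h1 : (p : ℤ) ∣ 2 := (ZMod.intCast_zmod_eq_zero_iff_dvd 2 p).1 h
    have h2 : p ∣ 2 := by exact_mod_cast h1
    have h3 := (Nat.prime_dvd_prime_iff_eq hp Nat.prime_two).1 h2
    subst h3
    exact absurd ‹Odd 2› (by decide)
  have key2 : ((2 * 2 * (m * m') : ℤ) : ZMod p) = ((s * s : ℤ) : ZMod p) := by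
    have : 2 * 2 * (m * m') = s * s - D * (x*w-y*z)^2 := by linarith
    rw [this]; push_cast; rw [hD0]; ring
  have hs : ((s : ℤ) : ZMod p) ≠ 0 := by
    intro h
    push_cast at key2 hp2
    rw [h, mul_zero] at key2
    exact mul_ne_zero (mul_ne_zero hp2 hp2) (mul_ne_zero hm0 hm0') (by linear_combination key2)
  have hL : legendreSym p (2 * 2 * (m * m')) = legendreSym p (s * s) := by
    unfold legendreSym; rw [key2]
  simp only [legendreSym.mul] at hL
  have q2 := legendreSym.sq_one p hp2
  have qs := legendreSym.sq_one p hs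
  have qm := legendreSym.sq_one p hm0'
  rw [← sq, ← sq, q2, qs, one_mul] at hL
  calc legendreSym p m = legendreSym p m * legendreSym p m' ^ 2 := by rw [qm, mul_one]
    _ = (legendreSym p m * legendreSym p m') * legendreSym p m' := by ring
    _ = legendreSym p m' := by rw [hL, one_mul]
end
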